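/- Let < be a strict total order on A. For every three-valued conditional expression P over A there is a unique CLU-basic form ⟦P⟧ such that CP_cl^U ⊢ P = ⟦P⟧, and for all three-valued conditional expressions P and Q, CP_cl^U ⊢ P = Q if and only if ⟦P⟧ = ⟦Q⟧. -/

import Mathlib

/-!
Derivability coincides with equality of three-valued truth tables: an atom takes one of the values
true, false, undefined, and a conditional is undefined as soon as its condition is. The axioms are
sound for this reading (`DerClU.sound`).

Say that `P` *needs* the atom `b` if `P` is undefined whenever `b` is (`Needs`). On a mem-basic
form `P` the shared alphabet is exactly the set of atoms of `P` needed by `P` (`mem_sha`), so it is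
a semantic invariant as long as `P` is not everywhere undefined (`sha_congr`).

*Uniqueness.* If two CLU-basic forms have the same truth table and differ from `U`, then they have
the same shared alphabet, hence the same leading sequence `σ`. Letting a valuation on `σ` select a
branch shows that corresponding branches have the same truth table (`eval_Fseq_inj`), and induction
gives syntactic equality (`IsCUbf.eq_of_eval_eq`).

*Existence.* Every expression is derivably equal to a mem-basic form (`exists_mbf`), because (CPmem)
allows the reductions `lred a` and `rred a` below a test of `a`. An everywhere undefined mem-basic
form is derivably `U`. If `P` needs `b`, then repeated use of (CL2) moves the test of `b` to the root
(`der_pull`); doing so for all atoms of the shared alphabet gives `P = F_σ(…)` with branches having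
fewer atoms, and induction on the number of atoms finishes the construction (`exists_cubf`).
-/

/-- Three-valued conditional expressions over a set `A` of atoms: constants T, F, U,
atoms, and the ternary conditional `cond P Q R` read `P ◁ Q ▷ R` ("if Q then P else R"). -/
inductive ExprU (A : Type) : Type
  | T : ExprU A
  | F : ExprU A
  | U : ExprU A
  | atom : A → ExprU A
  | cond : ExprU A → ExprU A → ExprU A → ExprU A

namespace ExprU

/-- Derivability from the axiom system CP_cl^U = CP + (CPmem) + (CL2) + (CP-U). -/
inductive DerClU {A : Type} : ExprU A → ExprU A → Prop
  | refl (P : ExprU A) : DerClU P P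
  | symm {P Q : ExprU A} : DerClU P Q → DerClU Q P
  | trans {P Q R : ExprU A} : DerClU P Q → DerClU Q R → DerClU P R
  | congr {P P' Q Q' R R' : ExprU A} :
      DerClU P P' → DerClU Q Q' → DerClU R R' →
      DerClU (cond P Q R) (cond P' Q' R')
  | cp1 (x y : ExprU A) : DerClU (cond x T y) x
  | cp2 (x y : ExprU A) : DerClU (cond x F y) y
  | cp3 (x : ExprU A) : DerClU (cond T x F) x
  | cp4 (x y z u v : ExprU A) :
      DerClU (cond x (cond y z u) v) (cond (cond x y v) z (cond x u v))
  | cpmem (x y z u v w : ExprU A) :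
      DerClU (cond x y (cond z u (cond v y w))) (cond x y (cond z u w))
  | cl2 (x y z u v w : ExprU A) :
      DerClU (cond (cond x y z) u (cond v y w)) (cond (cond x u v) y (cond z u w))
  | cpu (x y : ExprU A) : DerClU (cond x U y) U

/-- The set α(P) of atoms occurring in a conditional expression. -/
def atoms {A : Type} [DecidableEq A] : ExprU A → Finset A
  | T => ∅
  | F => ∅
  | U => ∅
  | atom a => {a}
  | cond P Q R => atoms P ∪ atoms Q ∪ atoms R

/-- Three-valued mem-basic forms. -/
inductive IsMBF {A : Type} [DecidableEq A] : ExprU A → Prop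
  | T : IsMBF T
  | F : IsMBF F
  | U : IsMBF U
  | cond {P Q : ExprU A} (a : A) : IsMBF P → IsMBF Q →
      a ∉ atoms P → a ∉ atoms Q → IsMBF (cond P (atom a) Q)

/-- The auxiliary function f for the three-valued shared alphabet:
f(U, x) = x, f(T, x) = f(F, x) = ∅,
f(P₁ ◁ a ▷ P₂, x) = {a} ∪ (f(P₁, x \ {a}) ∩ f(P₂, x \ {a})). -/
def shaAux {A : Type} [DecidableEq A] : ExprU A → Finset A → Finset A
  | cond P (atom a) Q, x => insert a (shaAux P (x.erase a) ∩ shaAux Q (x.erase a))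
  | U, x => x
  | _, _ => ∅

/-- The shared alphabet α̃(P) = f(P, α(P)) of a three-valued mem-basic form. -/
def sha {A : Type} [DecidableEq A] (P : ExprU A) : Finset A :=
  shaAux P (atoms P)

/-- Left a-reduction ℓ_a on basic forms. -/
def lred {A : Type} [DecidableEq A] (a : A) : ExprU A → ExprU A
  | cond P (atom b) Q => if b = a then P else cond (lred a P) (atom b) (lred a Q)
  | e => e

/-- Right a-reduction r_a on basic forms. -/
def rred {A : Type} [DecidableEq A] (a : A) : ExprU A → ExprU A
  | cond P (atom b) Q => if b = a then Q else cond (rred a P) (atom b) (rred a Q)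
  | e => e

/-- `Fseq σ P` is the basic form F_σ(P_0, …, P_{2^{|σ|}−1}):
F_ε(P_0) = P_0 and F_{aρ}(P_0,…) = F_ρ(P_0,…,P_{2^{|ρ|}−1}) ◁ a ▷ F_ρ(P_{2^{|ρ|}},…). -/
def Fseq {A : Type} : (σ : List A) → (Fin (2 ^ σ.length) → ExprU A) → ExprU A
  | [], P => P ⟨0, by positivity⟩
  | a :: ρ, P =>
      cond (Fseq ρ (fun i => P ⟨i.1, by have := i.2; simp [Nat.pow_succ]; omega⟩))
        (atom a)
        (Fseq ρ (fun i => P ⟨2 ^ ρ.length + i.1, by have := i.2; simp [Nat.pow_succ]; omega⟩))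

end ExprU

namespace ExprU
/-- CLU-basic forms (relative to the ordering of A): T, F and U are CLU-basic forms,
and a three-valued mem-basic form P is a CLU-basic form if, for σ the enumeration of
α̃(P) in increasing order, P = F_σ(P_0, …, P_{2^{|σ|}−1}) where some P_j ≠ U and each
P_i is a CLU-basic form. -/
inductive IsCUbf {A : Type} [LinearOrder A] : ExprU A → Prop
  | T : IsCUbf T
  | F : IsCUbf F
  | U : IsCUbf U
  | node {P : ExprU A} (hm : IsMBF P)
      (Ps : Fin (2 ^ ((sha P).sort (· ≤ ·)).length) → ExprU A)
      (hP : P = Fseq ((sha P).sort (· ≤ ·)) Ps)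
      (hne : ∃ j, Ps j ≠ ExprU.U)
      (hC : ∀ i, IsCUbf (Ps i)) : IsCUbf P
end ExprU

namespace ExprU

variable {A : Type}

/-! ### Three-valued semantics -/

/-- Value of an expression under a three-valued valuation of the atoms; `none` is the value
"undefined". -/
def eval (v : A → Option Bool) : ExprU A → Option Bool
  | T => some true
  | F => some false
  | U => none
  | atom a => v a
  | cond P Q R =>
      match eval v Q with
      | some true => eval v P
      | some false => eval v R
      | none => none

theorem DerClU.sound {P Q : ExprU A} (h : DerClU P Q) (v : A → Option Bool) :
    eval v P = eval v Q := by
  induction h with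
  | refl => rfl
  | symm _ ih => exact ih.symm
  | trans _ _ ih1 ih2 => exact ih1.trans ih2
  | congr _ _ _ ih1 ih2 ih3 => simp only [eval, ih1, ih2, ih3]
  | cp1 => rfl
  | cp2 => rfl
  | cp3 x => rcases h : eval v x with _ | _ | _ <;> simp [eval, h]
  | cp4 x y z u w => rcases h : eval v z with _ | _ | _ <;> simp [eval, h]
  | cpmem x y z u w w' =>
    rcases h : eval v y with _ | _ | _ <;> rcases h' : eval v u with _ | _ | _ <;>
      simp [eval, h, h']
  | cl2 x y z u w w' =>
    rcases h : eval v y with _ | _ | _ <;> rcases h' : eval v u with _ | _ | _ <;>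
      simp [eval, h, h']
  | cpu => rfl

/-- `P` needs the atom `b`: whenever `b` is undefined, so is `P`. -/
def Needs (P : ExprU A) (b : A) : Prop :=
  ∀ v : A → Option Bool, v b = none → eval v P = none

/-- `P` is undefined under every valuation. -/
def Undef (P : ExprU A) : Prop :=
  ∀ v : A → Option Bool, eval v P = none

section

variable [DecidableEq A]

theorem eval_update {P : ExprU A} {a : A} (h : a ∉ atoms P) (v : A → Option Bool)
    (o : Option Bool) : eval (Function.update v a o) P = eval v P := by
  induction P with
  | T => rfl
  | F => rfl
  | U => rfl
  | atom b =>
    have : b ≠ a := by rintro rfl; simp [atoms] at h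
    simp [eval, this]
  | cond P Q R ihP ihQ ihR =>
    simp only [atoms, Finset.mem_union, not_or] at h
    simp only [eval, ihP h.1.1, ihQ h.1.2, ihR h.2]

theorem eval_cond_true {P Q : ExprU A} {a : A} (h : a ∉ atoms P) (v : A → Option Bool) :
    eval (Function.update v a (some true)) (cond P (atom a) Q) = eval v P := by
  simp [eval, eval_update h]

theorem eval_cond_false {P Q : ExprU A} {a : A} (h : a ∉ atoms Q) (v : A → Option Bool) :
    eval (Function.update v a (some false)) (cond P (atom a) Q) = eval v Q := by
  simp [eval, eval_update h]

theorem undef_cond {P Q : ExprU A} {a : A} (hP : a ∉ atoms P) (hQ : a ∉ atoms Q)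
    (h : Undef (cond P (atom a) Q)) : Undef P ∧ Undef Q :=
  ⟨fun v => by rw [← eval_cond_true (Q := Q) hP]; exact h _,
   fun v => by rw [← eval_cond_false (P := P) hQ]; exact h _⟩

theorem needs_cond {P Q : ExprU A} {a b : A} (hP : a ∉ atoms P) (hQ : a ∉ atoms Q) :
    Needs (cond P (atom a) Q) b ↔ b = a ∨ (Needs P b ∧ Needs Q b) := by
  constructor
  · intro h
    by_cases hb : b = a
    · exact Or.inl hb
    · refine Or.inr ⟨fun v hv => ?_, fun v hv => ?_⟩
      · rw [← eval_cond_true (Q := Q) hP]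
        exact h _ (by simp [hb, hv])
      · rw [← eval_cond_false (P := P) hQ]
        exact h _ (by simp [hb, hv])
  · rintro (rfl | ⟨h1, h2⟩) v hv
    · simp [eval, hv]
    · rcases h : v a with _ | _ | _ <;> simp [eval, h, h1 v hv, h2 v hv]

theorem mem_shaAux {P : ExprU A} (hP : IsMBF P) :
    ∀ (x : Finset A), atoms P ⊆ x → ∀ b, b ∈ shaAux P x ↔ b ∈ x ∧ Needs P b := by
  induction hP with
  | T => intro x _ b; simpa [shaAux] using fun _ h => by simpa [eval] using h (fun _ => none) rfl
  | F => intro x _ b; simpa [shaAux] using fun _ h => by simpa [eval] using h (fun _ => none) rfl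
  | U => intro x _ b; simp [shaAux, Needs, eval]
  | @cond P Q a _ _ hP hQ ihP ihQ =>
    intro x hx b
    simp only [atoms, Finset.union_subset_iff, Finset.singleton_subset_iff] at hx
    rw [shaAux, needs_cond hP hQ, Finset.mem_insert, Finset.mem_inter,
      ihP _ (Finset.subset_erase.2 ⟨hx.1.1, hP⟩), ihQ _ (Finset.subset_erase.2 ⟨hx.2, hQ⟩),
      Finset.mem_erase]
    by_cases hb : b = a
    · subst hb; simp [hx.1.2]
    · simp [hb]; tauto

theorem mem_sha {P : ExprU A} (hP : IsMBF P) (b : A) : b ∈ sha P ↔ b ∈ atoms P ∧ Needs P b :=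
  mem_shaAux hP _ subset_rfl b

theorem mem_sha_of_not_undef {P : ExprU A} (hP : IsMBF P) (hU : ¬ Undef P) (b : A) :
    b ∈ sha P ↔ Needs P b := by
  rw [mem_sha hP, and_iff_right_iff_imp]
  intro h
  by_contra hb
  exact hU fun v => by rw [← eval_update hb v none]; exact h _ (by simp)

theorem sha_congr {P Q : ExprU A} (hP : IsMBF P) (hQ : IsMBF Q) (hU : ¬ Undef P)
    (h : ∀ v, eval v P = eval v Q) : sha P = sha Q := by
  have hU' : ¬ Undef Q := fun hQ => hU fun v => (h v).trans (hQ v)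
  ext b
  rw [mem_sha_of_not_undef hP hU, mem_sha_of_not_undef hQ hU']
  simp only [Needs, h]

/-! ### The sequence forms `F_σ` -/

/-- The index of branch `i` of the left half of `F_{aρ}`. -/
def lo (a : A) (ρ : List A) (i : Fin (2 ^ ρ.length)) : Fin (2 ^ (a :: ρ).length) :=
  ⟨i.1, by have := i.2; simp [Nat.pow_succ]; omega⟩

/-- The index of branch `i` of the right half of `F_{aρ}`. -/
def hi (a : A) (ρ : List A) (i : Fin (2 ^ ρ.length)) : Fin (2 ^ (a :: ρ).length) :=
  ⟨2 ^ ρ.length + i.1, by have := i.2; simp [Nat.pow_succ]; omega⟩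

end

theorem Fseq_cons (a : A) (ρ : List A) (Ps : Fin (2 ^ (a :: ρ).length) → ExprU A) :
    Fseq (a :: ρ) Ps =
      cond (Fseq ρ fun i => Ps (lo a ρ i)) (atom a) (Fseq ρ fun i => Ps (hi a ρ i)) := rfl

theorem lo_or_hi (a : A) (ρ : List A) (i : Fin (2 ^ (a :: ρ).length)) :
    (∃ k, i = lo a ρ k) ∨ ∃ k, i = hi a ρ k := by
  obtain ⟨i, hi'⟩ := i
  have h2 : i < 2 ^ ρ.length * 2 := by simpa [Nat.pow_succ] using hi'
  by_cases h : i < 2 ^ ρ.length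
  · exact Or.inl ⟨⟨i, h⟩, rfl⟩
  · refine Or.inr ⟨⟨i - 2 ^ ρ.length, by omega⟩, ?_⟩
    simp only [hi, Fin.mk.injEq]; omega

theorem forall_branch {a : A} {ρ : List A} {p : Fin (2 ^ (a :: ρ).length) → Prop}
    (h1 : ∀ k, p (lo a ρ k)) (h2 : ∀ k, p (hi a ρ k)) (i) : p i := by
  rcases lo_or_hi a ρ i with ⟨k, rfl⟩ | ⟨k, rfl⟩
  exacts [h1 k, h2 k]

theorem exists_join (a : A) (ρ : List A) (Ps Qs : Fin (2 ^ ρ.length) → ExprU A) :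
    ∃ Rs : Fin (2 ^ (a :: ρ).length) → ExprU A,
      (∀ k, Rs (lo a ρ k) = Ps k) ∧ ∀ k, Rs (hi a ρ k) = Qs k := by
  refine ⟨fun i => if h : i.1 < 2 ^ ρ.length then Ps ⟨i.1, h⟩ else
    Qs ⟨i.1 - 2 ^ ρ.length, ?_⟩, fun k => ?_, fun k => ?_⟩
  · have h2 : i.1 < 2 ^ ρ.length * 2 := by simpa [Nat.pow_succ] using i.2
    omega
  · simp [lo]
  · simp [hi]

theorem Fseq_nil (Ps : Fin (2 ^ ([] : List A).length) → ExprU A) (i) : Fseq [] Ps = Ps i := by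
  have : i = ⟨0, by positivity⟩ := by
    apply Fin.ext; have := i.2; simp at this; simp [this]
  subst this; rfl

theorem der_Fseq : ∀ (σ : List A) (Ps Qs : Fin (2 ^ σ.length) → ExprU A),
    (∀ i, DerClU (Ps i) (Qs i)) → DerClU (Fseq σ Ps) (Fseq σ Qs)
  | [], _, _, h => h _
  | _ :: ρ, _, _, h => .congr (der_Fseq ρ _ _ fun _ => h _) (.refl _) (der_Fseq ρ _ _ fun _ => h _)

theorem undef_Fseq : ∀ (σ : List A) (Ps : Fin (2 ^ σ.length) → ExprU A),
    (∀ i, Undef (Ps i)) → Undef (Fseq σ Ps)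
  | [], _, h => h _
  | a :: ρ, Ps, h => fun v => by
    have h1 := undef_Fseq ρ (fun i => Ps (lo a ρ i)) (fun _ => h _) v
    have h2 := undef_Fseq ρ (fun i => Ps (hi a ρ i)) (fun _ => h _) v
    rcases h : v a with _ | _ | _ <;> simp [Fseq_cons, eval, h, h1, h2]

section

variable [DecidableEq A]

theorem mem_atoms_Fseq : ∀ (σ : List A) (Ps : Fin (2 ^ σ.length) → ExprU A) (b : A),
    b ∈ atoms (Fseq σ Ps) ↔ b ∈ σ ∨ ∃ i, b ∈ atoms (Ps i)
  | [], Ps, b => by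
    constructor
    · intro h; exact Or.inr ⟨_, h⟩
    · rintro (h | ⟨i, h⟩)
      · simp at h
      · rwa [Fseq_nil Ps i]
  | a :: ρ, Ps, b => by
    rw [Fseq_cons, atoms, Finset.mem_union, Finset.mem_union, mem_atoms_Fseq, mem_atoms_Fseq]
    simp only [atoms, Finset.mem_singleton, List.mem_cons]
    constructor
    · rintro (((h | ⟨i, h⟩) | h) | (h | ⟨i, h⟩))
      exacts [.inl (.inr h), .inr ⟨_, h⟩, .inl (.inl h), .inl (.inr h), .inr ⟨_, h⟩]
    · rintro ((h | h) | ⟨i, h⟩)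
      · exact .inl (.inr h)
      · exact .inl (.inl (.inl h))
      · rcases lo_or_hi a ρ i with ⟨k, rfl⟩ | ⟨k, rfl⟩
        exacts [.inl (.inl (.inr ⟨k, h⟩)), .inr (.inr ⟨k, h⟩)]

theorem IsMBF.Fseq : ∀ (σ : List A) (Ps : Fin (2 ^ σ.length) → ExprU A), σ.Nodup →
    (∀ i, IsMBF (Ps i)) → (∀ i, ∀ a ∈ σ, a ∉ atoms (Ps i)) → IsMBF (Fseq σ Ps)
  | [], _, _, h, _ => h _
  | a :: ρ, Ps, hn, h, hd => by
    rw [List.nodup_cons] at hn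
    refine .cond a (IsMBF.Fseq ρ _ hn.2 (fun _ => h _) fun i b hb => hd _ b (by simp [hb]))
      (IsMBF.Fseq ρ _ hn.2 (fun _ => h _) fun i b hb => hd _ b (by simp [hb])) ?_ ?_ <;>
    · rw [mem_atoms_Fseq]
      rintro (h' | ⟨i, h'⟩)
      exacts [hn.1 h', hd _ a (by simp) h']

theorem IsMBF.disjoint_branch : ∀ (σ : List A) (Ps : Fin (2 ^ σ.length) → ExprU A),
    IsMBF (ExprU.Fseq σ Ps) → ∀ i, ∀ a ∈ σ, a ∉ atoms (Ps i)
  | [], _, _, _, _, ha => by simp at ha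
  | a :: ρ, Ps, h, i, b, hb => by
    rw [Fseq_cons] at h
    cases h with
    | cond _ h1 h2 ha1 ha2 =>
      rw [mem_atoms_Fseq, not_or, not_exists] at ha1 ha2
      rcases List.mem_cons.1 hb with rfl | hb
      · exact forall_branch (p := fun i => b ∉ atoms (Ps i)) ha1.2 ha2.2 i
      · exact forall_branch (p := fun i => b ∉ atoms (Ps i))
          (fun k => disjoint_branch ρ _ h1 k b hb) (fun k => disjoint_branch ρ _ h2 k b hb) i

/-- A valuation of the atoms of `σ` selects a branch of `F_σ`; as these atoms do not occur in the
branches, the truth table of `F_σ` determines that of every branch. -/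
theorem eval_Fseq_inj : ∀ (σ : List A) (Ps Qs : Fin (2 ^ σ.length) → ExprU A), σ.Nodup →
    (∀ i, ∀ a ∈ σ, a ∉ atoms (Ps i)) → (∀ i, ∀ a ∈ σ, a ∉ atoms (Qs i)) →
    (∀ v, eval v (Fseq σ Ps) = eval v (Fseq σ Qs)) → ∀ i v, eval v (Ps i) = eval v (Qs i)
  | [], Ps, Qs, _, _, _, h, i, v => by
    rw [← Fseq_nil Ps i, ← Fseq_nil Qs i]; exact h v
  | a :: ρ, Ps, Qs, hn, hP, hQ, h, i, v => by
    rw [List.nodup_cons] at hn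
    have key : ∀ (Rs : Fin (2 ^ ρ.length) → ExprU A), (∀ i, a ∉ atoms (Rs i)) →
        a ∉ atoms (Fseq ρ Rs) := fun Rs hR => by
      rw [mem_atoms_Fseq, not_or, not_exists]; exact ⟨hn.1, hR⟩
    simp only [Fseq_cons] at h
    refine forall_branch (p := fun i => eval v (Ps i) = eval v (Qs i)) (fun k => ?_)
      (fun k => ?_) i
    · refine eval_Fseq_inj ρ (fun i => Ps (lo a ρ i)) (fun i => Qs (lo a ρ i)) hn.2
        (fun i b hb => hP _ b (by simp [hb])) (fun i b hb => hQ _ b (by simp [hb]))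
        (fun w => ?_) k v
      have := h (Function.update w a (some true))
      rwa [eval_cond_true (key _ fun i => hP _ a (by simp)),
        eval_cond_true (key _ fun i => hQ _ a (by simp))] at this
    · refine eval_Fseq_inj ρ (fun i => Ps (hi a ρ i)) (fun i => Qs (hi a ρ i)) hn.2
        (fun i b hb => hP _ b (by simp [hb])) (fun i b hb => hQ _ b (by simp [hb]))
        (fun w => ?_) k v
      have := h (Function.update w a (some false))
      rwa [eval_cond_false (key _ fun i => hP _ a (by simp)),
        eval_cond_false (key _ fun i => hQ _ a (by simp))] at this

/-! ### Derivations -/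

end

/-- Swapping the branches of a conditional amounts to negating its condition. -/
theorem der_flip (x y z : ExprU A) : DerClU (cond x y z) (cond z (cond F y T) x) :=
  .symm (.trans (.cp4 _ _ _ _ _) (.congr (.cp2 _ _) (.refl _) (.cp1 _ _)))

/-- The variant of (CPmem) with the inner condition negated. -/
theorem der_mem_rl (x y z u v w : ExprU A) :
    DerClU (cond x y (cond (cond v y w) u z)) (cond x y (cond w u z)) :=
  .trans (.congr (.refl _) (.refl _) (der_flip _ _ _)) <|
    .trans (.cpmem _ _ _ _ _ _) (.congr (.refl _) (.refl _) (der_flip _ _ _).symm)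

/-- The variant of (CPmem) with the outer condition negated. -/
theorem der_mem_lr (x y z u v w : ExprU A) :
    DerClU (cond (cond z u (cond v y w)) y x) (cond (cond z u v) y x) :=
  .trans (der_flip _ _ _) <|
    .trans (.congr (.refl _) (.refl _) (.congr (.refl _) (.refl _) (der_flip _ _ _))) <|
      .trans (.cpmem _ _ _ _ _ _) (der_flip _ _ _).symm

/-- The variant of (CPmem) with both conditions negated. -/
theorem der_mem_ll (x y z u v w : ExprU A) :
    DerClU (cond (cond (cond v y w) u z) y x) (cond (cond v u z) y x) :=
  .trans (.congr (der_flip _ _ _) (.refl _) (.refl _)) <|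
    .trans (der_mem_lr _ _ _ _ _ _) (.congr (der_flip _ _ _).symm (.refl _) (.refl _))

theorem der_contr_r (x y v w : ExprU A) : DerClU (cond x y (cond v y w)) (cond x y w) :=
  .trans (.congr (.refl _) (.refl _) (DerClU.cp2 U _).symm) <|
    .trans (.cpmem _ _ _ _ _ _) (.congr (.refl _) (.refl _) (.cp2 _ _))

theorem der_contr_l (x y v w : ExprU A) : DerClU (cond (cond v y w) y x) (cond v y x) :=
  .trans (.congr (DerClU.cp2 U _).symm (.refl _) (.refl _)) <|
    .trans (der_mem_lr _ _ _ _ _ _) (.congr (.cp2 _ _) (.refl _) (.refl _))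

theorem der_U_cond (x : ExprU A) : DerClU (cond U x U) U :=
  .trans (.congr (DerClU.cpu T T).symm (.refl _) (DerClU.cpu T T).symm) <|
    .trans (.cl2 _ _ _ _ _ _) (.cpu _ _)

section

variable [DecidableEq A]

-- In both reduction lemmas an auxiliary test of `a` is inserted above each branch by (CPmem), so
-- that the induction hypothesis becomes applicable there, and is removed again afterwards.
theorem der_rred {Q : ExprU A} (hQ : IsMBF Q) (a : A) :
    ∀ x, DerClU (cond x (atom a) Q) (cond x (atom a) (rred a Q)) := by
  induction hQ with
  | T => exact fun x => .refl _
  | F => exact fun x => .refl _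
  | U => exact fun x => .refl _
  | @cond P Q b _ _ _ _ ihP ihQ =>
    intro x
    by_cases hb : b = a
    · subst hb
      simp only [rred, if_true]
      exact der_contr_r _ _ _ _
    · simp only [rred, if_neg hb]
      refine .trans (DerClU.cpmem x (atom a) P (atom b) U Q).symm ?_
      refine .trans (.congr (.refl _) (.refl _) (.congr (.refl _) (.refl _) (ihQ U))) ?_
      refine .trans (.cpmem _ _ _ _ _ _) ?_
      refine .trans (der_mem_rl x (atom a) _ (atom b) U P).symm ?_
      refine .trans (.congr (.refl _) (.refl _) (.congr (ihP U) (.refl _) (.refl _))) ?_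
      exact der_mem_rl _ _ _ _ _ _

theorem der_lred {Q : ExprU A} (hQ : IsMBF Q) (a : A) :
    ∀ x, DerClU (cond Q (atom a) x) (cond (lred a Q) (atom a) x) := by
  induction hQ with
  | T => exact fun x => .refl _
  | F => exact fun x => .refl _
  | U => exact fun x => .refl _
  | @cond P Q b _ _ _ _ ihP ihQ =>
    intro x
    by_cases hb : b = a
    · subst hb
      simp only [lred, if_true]
      exact der_contr_l _ _ _ _
    · simp only [lred, if_neg hb]
      refine .trans (der_mem_lr x (atom a) P (atom b) Q U).symm ?_
      refine .trans (.congr (.congr (.refl _) (.refl _) (ihQ U)) (.refl _) (.refl _)) ?_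
      refine .trans (der_mem_lr _ _ _ _ _ _) ?_
      refine .trans (der_mem_ll x (atom a) _ (atom b) P U).symm ?_
      refine .trans (.congr (.congr (ihP U) (.refl _) (.refl _)) (.refl _) (.refl _)) ?_
      exact der_mem_ll _ _ _ _ _ _

theorem mbf_rred {P : ExprU A} (hP : IsMBF P) (a : A) :
    IsMBF (rred a P) ∧ atoms (rred a P) ⊆ (atoms P).erase a := by
  induction hP with
  | T => exact ⟨.T, by simp [rred, atoms]⟩
  | F => exact ⟨.F, by simp [rred, atoms]⟩
  | U => exact ⟨.U, by simp [rred, atoms]⟩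
  | @cond P Q b h1 h2 hb1 hb2 ihP ihQ =>
    by_cases hb : b = a
    · subst hb
      simp only [rred, if_true]
      exact ⟨h2, fun c hc => by simp [atoms, hc]; rintro rfl; exact hb2 hc⟩
    · simp only [rred, if_neg hb]
      refine ⟨.cond b ihP.1 ihQ.1 (fun h => hb1 (Finset.mem_of_mem_erase (ihP.2 h)))
        (fun h => hb2 (Finset.mem_of_mem_erase (ihQ.2 h))), fun c hc => ?_⟩
      have h3 := @ihP.2 c
      have h4 := @ihQ.2 c
      simp only [atoms, Finset.mem_union, Finset.mem_singleton, Finset.mem_erase] at *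
      grind

theorem mbf_lred {P : ExprU A} (hP : IsMBF P) (a : A) :
    IsMBF (lred a P) ∧ atoms (lred a P) ⊆ (atoms P).erase a := by
  induction hP with
  | T => exact ⟨.T, by simp [lred, atoms]⟩
  | F => exact ⟨.F, by simp [lred, atoms]⟩
  | U => exact ⟨.U, by simp [lred, atoms]⟩
  | @cond P Q b h1 h2 hb1 hb2 ihP ihQ =>
    by_cases hb : b = a
    · subst hb
      simp only [lred, if_true]
      exact ⟨h1, fun c hc => by simp [atoms, hc]; rintro rfl; exact hb1 hc⟩
    · simp only [lred, if_neg hb]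
      refine ⟨.cond b ihP.1 ihQ.1 (fun h => hb1 (Finset.mem_of_mem_erase (ihP.2 h)))
        (fun h => hb2 (Finset.mem_of_mem_erase (ihQ.2 h))), fun c hc => ?_⟩
      have h3 := @ihP.2 c
      have h4 := @ihQ.2 c
      simp only [atoms, Finset.mem_union, Finset.mem_singleton, Finset.mem_erase] at *
      grind

theorem exists_mbf_cond {P R : ExprU A} (hP : IsMBF P) (hR : IsMBF R) {Q : ExprU A}
    (hQ : IsMBF Q) : ∃ M, IsMBF M ∧ DerClU (cond P Q R) M := by
  induction hQ with
  | T => exact ⟨P, hP, .cp1 _ _⟩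
  | F => exact ⟨R, hR, .cp2 _ _⟩
  | U => exact ⟨U, .U, .cpu _ _⟩
  | @cond Q1 Q2 a _ _ _ _ ih1 ih2 =>
    obtain ⟨M1, hM1, h1⟩ := ih1
    obtain ⟨M2, hM2, h2⟩ := ih2
    refine ⟨cond (lred a M1) (atom a) (rred a M2), .cond a (mbf_lred hM1 a).1 (mbf_rred hM2 a).1
      (fun h => by simpa using (mbf_lred hM1 a).2 h)
      (fun h => by simpa using (mbf_rred hM2 a).2 h), ?_⟩
    exact .trans (.cp4 _ _ _ _ _) <| .trans (.congr h1 (.refl _) h2) <|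
      .trans (der_lred hM1 a _) (der_rred hM2 a _)

theorem exists_mbf (P : ExprU A) : ∃ M, IsMBF M ∧ DerClU P M := by
  induction P with
  | T => exact ⟨T, .T, .refl _⟩
  | F => exact ⟨F, .F, .refl _⟩
  | U => exact ⟨U, .U, .refl _⟩
  | atom a => exact ⟨cond T (atom a) F, .cond a .T .F (by simp [atoms]) (by simp [atoms]),
      (DerClU.cp3 _).symm⟩
  | cond P Q R ihP ihQ ihR =>
    obtain ⟨P', hP, dP⟩ := ihP
    obtain ⟨Q', hQ, dQ⟩ := ihQ
    obtain ⟨R', hR, dR⟩ := ihR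
    obtain ⟨M, hM, d⟩ := exists_mbf_cond hP hR hQ
    exact ⟨M, hM, .trans (.congr dP dQ dR) d⟩

theorem der_U_of_undef {P : ExprU A} (hP : IsMBF P) (h : Undef P) : DerClU P U := by
  induction hP with
  | T => simpa [eval] using h fun _ => none
  | F => simpa [eval] using h fun _ => none
  | U => exact .refl _
  | cond a _ _ h1 h2 ih1 ih2 =>
    obtain ⟨u1, u2⟩ := undef_cond h1 h2 h
    exact .trans (.congr (ih1 u1) (.refl _) (ih2 u2)) (der_U_cond _)

/-- The test of a needed atom can be moved to the root. -/
theorem der_pull {P : ExprU A} (hP : IsMBF P) (b : A) (h : Needs P b) :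
    DerClU P (cond (lred b P) (atom b) (rred b P)) := by
  induction hP with
  | T => simpa [eval] using h (fun _ => none) rfl
  | F => simpa [eval] using h (fun _ => none) rfl
  | U => exact (der_U_cond _).symm
  | @cond P Q a _ _ h1 h2 ih1 ih2 =>
    by_cases hb : a = b
    · subst hb
      simp only [lred, rred, if_true]
      exact .refl _
    · rcases (needs_cond h1 h2).1 h with h' | ⟨n1, n2⟩
      · exact absurd h'.symm hb
      · simp only [lred, rred, if_neg hb]
        exact .trans (.congr (ih1 n1) (.refl _) (ih2 n2)) (.cl2 _ _ _ _ _ _)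

theorem exists_Fseq : ∀ (σ : List A) (P : ExprU A), σ.Nodup → IsMBF P → (∀ a ∈ σ, Needs P a) →
    ∃ Ps : Fin (2 ^ σ.length) → ExprU A, DerClU P (Fseq σ Ps) ∧
      ∀ i, IsMBF (Ps i) ∧ atoms (Ps i) ⊆ atoms P ∧ ∀ a ∈ σ, a ∉ atoms (Ps i)
  | [], P, _, hP, _ => ⟨fun _ => P, .refl _, fun _ => ⟨hP, subset_rfl, by simp⟩⟩
  | a :: ρ, P, hn, hP, h => by
    rw [List.nodup_cons] at hn
    have d := der_pull hP a (h a (by simp))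
    obtain ⟨m1, s1⟩ := mbf_lred hP a
    obtain ⟨m2, s2⟩ := mbf_rred hP a
    have a1 : a ∉ atoms (lred a P) := fun h => by simpa using s1 h
    have a2 : a ∉ atoms (rred a P) := fun h => by simpa using s2 h
    have hneeds : ∀ b ∈ ρ, Needs (lred a P) b ∧ Needs (rred a P) b := by
      intro b hb
      have : Needs (cond (lred a P) (atom a) (rred a P)) b := fun v hv => by
        rw [← d.sound v]; exact h b (by simp [hb]) v hv
      rcases (needs_cond a1 a2).1 this with rfl | h'
      exacts [absurd hb hn.1, h']
    obtain ⟨Ps, dP, hPs⟩ := exists_Fseq ρ _ hn.2 m1 fun b hb => (hneeds b hb).1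
    obtain ⟨Qs, dQ, hQs⟩ := exists_Fseq ρ _ hn.2 m2 fun b hb => (hneeds b hb).2
    obtain ⟨Rs, hR1, hR2⟩ := exists_join a ρ Ps Qs
    refine ⟨Rs, .trans d ?_, forall_branch (fun k => ?_) (fun k => ?_)⟩
    · simp only [Fseq_cons, hR1, hR2]
      exact .congr dP (.refl _) dQ
    · rw [hR1]
      obtain ⟨x, y, z⟩ := hPs k
      refine ⟨x, fun c hc => Finset.mem_of_mem_erase (s1 (y hc)), fun b hb => ?_⟩
      rcases List.mem_cons.1 hb with rfl | hb
      exacts [fun hc => a1 (y hc), z b hb]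
    · rw [hR2]
      obtain ⟨x, y, z⟩ := hQs k
      refine ⟨x, fun c hc => Finset.mem_of_mem_erase (s2 (y hc)), fun b hb => ?_⟩
      rcases List.mem_cons.1 hb with rfl | hb
      exacts [fun hc => a2 (y hc), z b hb]

theorem root_mem_sha (P Q : ExprU A) (a : A) : a ∈ sha (cond P (atom a) Q) := by
  simp [sha, shaAux]

/-! ### CLU-basic forms -/

end

section

variable [LinearOrder A]

theorem IsCUbf.isMBF {P : ExprU A} (h : IsCUbf P) : IsMBF P := by
  cases h with
  | T => exact .T
  | F => exact .F
  | U => exact .U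
  | node hm => exact hm

theorem IsCUbf.eq_U {P : ExprU A} (h : IsCUbf P) : Undef P → P = ExprU.U := by
  induction h with
  | T => exact fun h => by simpa [eval] using h fun _ => none
  | F => exact fun h => by simpa [eval] using h fun _ => none
  | U => exact fun _ => rfl
  | @node P hm Ps hP hne hC ih =>
    intro hU
    obtain ⟨j, hj⟩ := hne
    refine absurd (ih j fun v => ?_) hj
    refine eval_Fseq_inj _ Ps (fun _ => ExprU.U) (Finset.sort_nodup _ _)
      (IsMBF.disjoint_branch _ Ps (hP ▸ hm)) (by simp [atoms]) (fun w => ?_) j v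
    rw [← hP, hU w, undef_Fseq _ _ (fun _ _ => rfl) w]

theorem eq_const_of_sha_empty {Q : ExprU A} (hQ : IsMBF Q) (h : sha Q = ∅) :
    Q = T ∨ Q = F ∨ Q = U := by
  cases hQ with
  | T => simp
  | F => simp
  | U => simp
  | @cond P Q a => simpa [h] using root_mem_sha P Q a

/-- A CLU-basic form other than `U` is a sequence form over its shared alphabet; `T` and `F` are
covered with the empty sequence. -/
theorem IsCUbf.exists_Fseq {Q : ExprU A} (h : IsCUbf Q) (hU : Q ≠ ExprU.U) :
    ∃ (σ : List A) (Qs : Fin (2 ^ σ.length) → ExprU A),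
      σ = (sha Q).sort (· ≤ ·) ∧ Q = Fseq σ Qs ∧ ∀ i, IsCUbf (Qs i) := by
  cases h with
  | T => exact ⟨[], fun _ => ExprU.T, by simp [sha, shaAux], rfl, fun _ => .T⟩
  | F => exact ⟨[], fun _ => ExprU.F, by simp [sha, shaAux], rfl, fun _ => .F⟩
  | U => exact absurd rfl hU
  | node hm Ps hP hne hC => exact ⟨_, Ps, rfl, hP, hC⟩

theorem IsCUbf.eq_of_eval_eq {P : ExprU A} (hP : IsCUbf P) :
    ∀ {Q : ExprU A}, IsCUbf Q → (∀ v, eval v P = eval v Q) → P = Q := by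
  have hconst : ∀ {P Q : ExprU A}, IsMBF P → sha P = ∅ → ¬ Undef P → IsCUbf Q →
      (∀ v, eval v P = eval v Q) → Q = ExprU.T ∨ Q = ExprU.F ∨ Q = ExprU.U := fun hm hs hU hQ h =>
    eq_const_of_sha_empty hQ.isMBF (by rw [← sha_congr hm hQ.isMBF hU h, hs])
  induction hP with
  | T =>
    intro Q hQ h
    rcases hconst .T (by simp [sha, shaAux])
      (fun h => by simpa [eval] using h fun _ => none) hQ h with rfl | rfl | rfl
    · rfl
    all_goals simpa [eval] using h fun _ => none
  | F =>
    intro Q hQ h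
    rcases hconst .F (by simp [sha, shaAux])
      (fun h => by simpa [eval] using h fun _ => none) hQ h with rfl | rfl | rfl
    · simpa [eval] using h fun _ => none
    · rfl
    · simpa [eval] using h fun _ => none
  | U => exact fun hQ h => (hQ.eq_U fun v => (h v).symm).symm
  | @node P hm Ps hPs hne hC ih =>
    intro Q hQ h
    by_cases hU : Undef P
    · rw [(IsCUbf.node hm Ps hPs hne hC).eq_U hU, hQ.eq_U fun v => (h v).symm.trans (hU v)]
    · have hQU : Q ≠ ExprU.U := by rintro rfl; exact hU h
      obtain ⟨σ, Qs, hσ, hQs, hCQ⟩ := hQ.exists_Fseq hQU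
      rw [← sha_congr hm hQ.isMBF hU h] at hσ
      subst hσ
      have hb : Ps = Qs := funext fun i => ih i (hCQ i) <|
        eval_Fseq_inj _ Ps Qs (Finset.sort_nodup _ _)
          (IsMBF.disjoint_branch _ Ps (hPs ▸ hm)) (IsMBF.disjoint_branch _ Qs (hQs ▸ hQ.isMBF))
          (fun v => by rw [← hPs, ← hQs, h]) i
      rw [hPs, hQs, hb]

theorem exists_cubf_of_mbf : ∀ (n : ℕ) (P : ExprU A), IsMBF P → (atoms P).card ≤ n →
    ∃ Q, IsCUbf Q ∧ DerClU P Q ∧ atoms Q ⊆ atoms P := by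
  intro n
  induction n with
  | zero =>
    intro P hP hn
    have h0 : atoms P = ∅ := by simpa using hn
    have hs : sha P = ∅ := by
      ext b; simp [mem_sha hP, h0]
    rcases eq_const_of_sha_empty hP hs with rfl | rfl | rfl
    exacts [⟨_, .T, .refl _, subset_rfl⟩, ⟨_, .F, .refl _, subset_rfl⟩,
      ⟨_, .U, .refl _, subset_rfl⟩]
  | succ n ih =>
    intro P hP hn
    by_cases hU : Undef P
    · exact ⟨U, .U, der_U_of_undef hP hU, by simp [atoms]⟩
    by_cases hs : sha P = ∅
    · rcases eq_const_of_sha_empty hP hs with rfl | rfl | rfl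
      exacts [⟨_, .T, .refl _, subset_rfl⟩, ⟨_, .F, .refl _, subset_rfl⟩,
        ⟨_, .U, .refl _, subset_rfl⟩]
    obtain ⟨c, hc⟩ := Finset.nonempty_iff_ne_empty.2 hs
    obtain ⟨σ, hσ⟩ : ∃ σ, σ = (sha P).sort (· ≤ ·) := ⟨_, rfl⟩
    have hmem : ∀ a, a ∈ σ ↔ a ∈ sha P := fun a => by rw [hσ, Finset.mem_sort]
    have hnd : σ.Nodup := hσ ▸ Finset.sort_nodup _ _
    obtain ⟨Ps, dP, hPs⟩ := ExprU.exists_Fseq σ P hnd hP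
      fun a ha => ((mem_sha hP a).1 ((hmem a).1 ha)).2
    have hbranch : ∀ i, ∃ Q, IsCUbf Q ∧ DerClU (Ps i) Q ∧ atoms Q ⊆ atoms (Ps i) := fun i => by
      refine ih _ (hPs i).1 (Nat.lt_succ_iff.1 (lt_of_lt_of_le (Finset.card_lt_card ?_) hn))
      refine Finset.ssubset_iff_subset_ne.2 ⟨(hPs i).2.1, fun he => ?_⟩
      exact (hPs i).2.2 c ((hmem c).2 hc) (he ▸ ((mem_sha hP c).1 hc).1)
    choose Qs hC dQ sQ using hbranch
    have d : DerClU P (Fseq σ Qs) := dP.trans (der_Fseq σ Ps Qs dQ)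
    have hm : IsMBF (Fseq σ Qs) := IsMBF.Fseq σ Qs hnd (fun i => (hC i).isMBF)
      fun i a ha h => (hPs i).2.2 a ha (sQ i h)
    have hsha : σ = (sha (Fseq σ Qs)).sort (· ≤ ·) := by
      rw [← sha_congr hP hm hU d.sound]; exact hσ
    refine ⟨Fseq σ Qs, ?_, d, fun b hb => ?_⟩
    · have hne : ∃ j, Qs j ≠ U := by
        by_contra! hall
        exact hU fun v => (d.sound v).trans
          (undef_Fseq σ Qs (fun i w => by rw [hall i]; rfl) v)
      obtain ⟨R, hR⟩ : ∃ R, R = Fseq σ Qs := ⟨_, rfl⟩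
      rw [← hR] at hm hsha ⊢
      subst hsha
      exact .node hm Qs hR hne hC
    · rcases (mem_atoms_Fseq σ Qs b).1 hb with h | ⟨i, h⟩
      · exact ((mem_sha hP b).1 ((hmem b).1 h)).1
      · exact (hPs i).2.1 (sQ i h)

theorem exists_cubf (P : ExprU A) : ∃ Q, IsCUbf Q ∧ DerClU P Q := by
  obtain ⟨M, hM, d⟩ := exists_mbf P
  obtain ⟨Q, hQ, d', _⟩ := exists_cubf_of_mbf _ M hM le_rfl
  exact ⟨Q, hQ, d.trans d'⟩

end

end ExprU

open ExprU in
/-- For every three-valued conditional expression P over A (with A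
strictly totally ordered) there is a unique CLU-basic form ⟦P⟧ with CP_cl^U ⊢ P = ⟦P⟧;
and for all P, Q, CP_cl^U ⊢ P = Q iff ⟦P⟧ = ⟦Q⟧. -/
theorem stmt_10 {A : Type} [LinearOrder A] :
    ∃ nf : ExprU A → ExprU A,
      (∀ P : ExprU A, (IsCUbf (nf P) ∧ DerClU P (nf P)) ∧
        ∀ Q : ExprU A, IsCUbf Q ∧ DerClU P Q → Q = nf P) ∧
      (∀ P Q : ExprU A, DerClU P Q ↔ nf P = nf Q) := by
  choose nf hC hD using exists_cubf (A := A)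
  refine ⟨nf, fun P => ⟨⟨hC P, hD P⟩, fun Q hQ => ?_⟩, fun P Q => ⟨fun h => ?_, fun h => ?_⟩⟩
  · exact hQ.1.eq_of_eval_eq (hC P) ((hQ.2.symm.trans (hD P)).sound)
  · exact (hC P).eq_of_eval_eq (hC Q) (((hD P).symm.trans (h.trans (hD Q))).sound)
  · exact (hD P).trans (h ▸ (hD Q).symm)
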